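/- (Infinitesimal generator of the stable semigroup, α ∈ (1,2).) Let α ∈ (1,2), m₁, m₂ ∈ [0,∞) with m₁ + m₂ > 0, β ∈ ℝ, and let f be a complex-valued Schwartz function on ℝ. Then for every x ∈ ℝ, lim_{t→0⁺} (P_t f(x) - f(x))/t = -x f'(x) + Γ_α f'(x) + ∫_ℝ (f'(x+u) - f'(x)·1_{|u|≤1}) u ν_α(du), the integral converging absolutely. -/

import Mathlib

open MeasureTheory

/-- The α-stable Lévy measure on ℝ with density
`u ↦ m₁ u^(-α-1) 1_{(0,∞)}(u) + m₂ |u|^(-α-1) 1_{(-∞,0)}(u)` w.r.t. Lebesgue measure. -/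
noncomputable def nuStable (α m₁ m₂ : ℝ) : Measure ℝ :=
  (volume : Measure ℝ).withDensity fun u =>
    ENNReal.ofReal (if 0 < u then m₁ * u ^ (-α - 1) else if u < 0 then m₂ * |u| ^ (-α - 1) else 0)

/-- Location parameter for `α ∈ [1,2)`:
`Γ_α = β + 2(m₁-m₂)∫₀^1 u^{2-α}(1+u²)^{-1} du - (m₁-m₂)∫₀^∞ min(1,u²) u^{-α}(1+u²)^{-1} du`. -/
noncomputable def Gamma12 (α m₁ m₂ β : ℝ) : ℝ :=
  β + 2 * (m₁ - m₂) * (∫ u in Set.Ioc (0 : ℝ) 1, u ^ (2 - α) / (1 + u ^ 2)) -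
    (m₁ - m₂) * ∫ u in Set.Ioi (0 : ℝ), min 1 (u ^ 2) * u ^ (-α) / (1 + u ^ 2)

/-- Characteristic function of the `α`-stable law, `α ∈ [1,2)`:
`ψ_α(t) = exp(itΓ_α + ∫_ℝ (e^{itu} - 1 - itu·1_{|u|≤1}) ν_α(du))`. -/
noncomputable def psi12 (α m₁ m₂ β : ℝ) (t : ℝ) : ℂ :=
  Complex.exp (Complex.I * t * (Gamma12 α m₁ m₂ β) +
    ∫ u : ℝ, (Complex.exp (Complex.I * t * u) - 1 -
      (if |u| ≤ 1 then Complex.I * t * u else 0)) ∂(nuStable α m₁ m₂))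

/-- Fourier transform `f̂(ξ) = ∫_ℝ f(x) e^{-ixξ} dx`. -/
noncomputable def fourierT (g : ℝ → ℂ) (ξ : ℝ) : ℂ :=
  ∫ x : ℝ, g x * Complex.exp (-(Complex.I * x * ξ))

/-- The stable Fourier-multiplier family
`P_t f(x) = (1/2π) ∫_ℝ f̂(ξ) e^{iξx e^{-t}} ψ_α(ξ)/ψ_α(e^{-t}ξ) dξ`, `α ∈ [1,2)`. -/
noncomputable def Pt (α m₁ m₂ β : ℝ) (t : ℝ) (g : ℝ → ℂ) (x : ℝ) : ℂ :=
  ((1 / (2 * Real.pi) : ℝ) : ℂ) *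
    ∫ ξ : ℝ, fourierT g ξ * Complex.exp (Complex.I * ξ * x * ((Real.exp (-t) : ℝ) : ℂ)) *
      psi12 α m₁ m₂ β ξ / psi12 α m₁ m₂ β (Real.exp (-t) * ξ)

/-! The multiplier of `P_t` is `e^{G_t(ξ)}` with `G_t(ξ) = iξxe^{-t} + η(ξ) - η(e^{-t}ξ)`, where
`η` is the Lévy–Khintchine exponent. Self-decomposability of the Lévy measure makes `Re η` decrease
along rays, so the multiplier is bounded by `1` for `t ≥ 0`; a finite first moment at infinity makes
`η` differentiable with `η'` of linear growth. Since `f̂` decays rapidly, `P_t f(x)` can be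
differentiated under the integral sign on `[0, ∞)`. At `t = 0` the derivative of the multiplier is
`iξ e^{iξx} (γ - x + ∫ (e^{iξu} - 1_{|u| ≤ 1}) u ν(du))`, and Fubini with Fourier inversion for `f'`
turns it into the stated integro-differential operator. -/

section DerivUnderIntegral

open Topology

lemma hasDerivWithinAt_integral_of_dominated_of_convex {A E : Type*} [MeasurableSpace A]
    {μ : Measure A} [NormedAddCommGroup E] [NormedSpace ℝ E] {F F' : ℝ → A → E} {s : Set ℝ}
    {t₀ : ℝ} {bound : A → ℝ} (hs : Convex ℝ s) (ht₀ : t₀ ∈ s)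
    (hF : ∀ t ∈ s, Integrable (F t) μ) (hbound : Integrable bound μ)
    (hF'_le : ∀ᵐ a ∂μ, ∀ t ∈ s, ‖F' t a‖ ≤ bound a)
    (hF' : ∀ᵐ a ∂μ, ∀ t ∈ s, HasDerivWithinAt (fun t => F t a) (F' t a) s t) :
    HasDerivWithinAt (fun t => ∫ a, F t a ∂μ) (∫ a, F' t₀ a ∂μ) s t₀ := by
  have hmem : ∀ᶠ t in 𝓝[s \ {t₀}] t₀, t ∈ s \ {t₀} := self_mem_nhdsWithin
  have slope_integral : ∀ᶠ t in 𝓝[s \ {t₀}] t₀,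
      ∫ a, slope (fun t => F t a) t₀ t ∂μ = slope (fun t => ∫ a, F t a ∂μ) t₀ t := by
    filter_upwards [hmem] with t ht
    simp only [slope_def_module, integral_smul, integral_sub (hF t ht.1) (hF t₀ ht₀)]
  rw [hasDerivWithinAt_iff_tendsto_slope]
  refine (tendsto_integral_filter_of_dominated_convergence bound ?_ ?_ hbound ?_).congr'
    slope_integral
  · filter_upwards [hmem] with t ht
    simp only [slope_def_module]
    exact (((hF t ht.1).sub (hF t₀ ht₀)).smul _).aestronglyMeasurable
  · filter_upwards [hmem] with t ht
    filter_upwards [hF'_le, hF'] with a hle hderiv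
    have mean_value : ‖F t a - F t₀ a‖ ≤ bound a * ‖t - t₀‖ :=
      hs.norm_image_sub_le_of_norm_hasDerivWithin_le hderiv hle ht₀ ht.1
    rwa [slope_def_module, norm_smul, norm_inv,
      inv_mul_le_iff₀ (norm_pos_iff.2 (sub_ne_zero.2 ht.2)), mul_comm]
  · filter_upwards [hF'] with a hderiv
    exact hasDerivWithinAt_iff_tendsto_slope.1 (hderiv t₀ ht₀)

end DerivUnderIntegral

section FourierInversion

open FourierTransform
open Complex (I exp)

lemma norm_exp_I_mul_mul (ξ u : ℝ) : ‖exp (I * ξ * u)‖ = 1 := by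
  rw [mul_assoc, ← Complex.ofReal_mul, Complex.norm_exp_I_mul_ofReal]

lemma fourierT_eq_fourier (g : ℝ → ℂ) (ξ : ℝ) : fourierT g ξ = 𝓕 g ((2 * Real.pi)⁻¹ * ξ) := by
  rw [Real.fourier_real_eq_integral_exp_smul]
  refine integral_congr_ae (.of_forall fun v => ?_)
  have phase : -2 * Real.pi * v * ((2 * Real.pi)⁻¹ * ξ) = -(v * ξ) := by
    field_simp
  simp only [phase, smul_eq_mul]
  rw [mul_comm]
  congr 2
  push_cast
  ring

lemma continuous_fourierT (f : SchwartzMap ℝ ℂ) : Continuous (fourierT f) := by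
  simp only [funext (fourierT_eq_fourier f), ← SchwartzMap.fourier_coe]
  exact (SchwartzMap.continuous _).comp (continuous_const_mul _)

lemma integrable_pow_mul_norm_fourierT (f : SchwartzMap ℝ ℂ) (n : ℕ) :
    Integrable (fun ξ => |ξ| ^ n * ‖fourierT f ξ‖) := by
  have rescaled := ((𝓕 f : SchwartzMap ℝ ℂ).integrable_pow_mul volume n).comp_mul_left'
    (R := (2 * Real.pi)⁻¹) (by positivity)
  refine (rescaled.const_mul ((2 * Real.pi) ^ n)).congr (.of_forall fun ξ => ?_)
  simp only [fourierT_eq_fourier, ← SchwartzMap.fourier_coe, ← mul_assoc, ← mul_pow,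
    Real.norm_eq_abs, abs_mul]
  rw [abs_of_pos (a := (2 * Real.pi)⁻¹) (by positivity), mul_inv_cancel₀ (by positivity), one_mul]

lemma fourierT_inversion {g : ℝ → ℂ} (hg : Integrable g) (hg' : Integrable (fourierT g)) {y : ℝ}
    (hy : ContinuousAt g y) :
    ((1 / (2 * Real.pi) : ℝ) : ℂ) * ∫ ξ : ℝ, fourierT g ξ * exp (I * ξ * y) = g y := by
  have two_pi_pos : 0 < 2 * Real.pi := by positivity
  have h𝓕 : Integrable (𝓕 g) := by
    rw [funext (fourierT_eq_fourier g)] at hg'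
    exact (integrable_comp_mul_left_iff _ (by positivity)).1 hg'
  have rescale := Measure.integral_comp_mul_left
    (fun ξ : ℝ => fourierT g ξ * exp (I * ξ * y)) (2 * Real.pi)
  rw [abs_of_pos (by positivity), Complex.real_smul, ← one_div] at rescale
  rw [← rescale, ← hg.fourierInv_fourier_eq h𝓕 hy, Real.fourierInv_eq']
  refine integral_congr_ae (.of_forall fun v => ?_)
  simp only [fourierT_eq_fourier, inv_mul_cancel_left₀ two_pi_pos.ne', smul_eq_mul]
  rw [mul_comm]
  congr 2
  simp only [RCLike.inner_apply, conj_trivial]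
  push_cast
  ring

lemma fourierT_deriv {g : ℝ → ℂ} (hg : Integrable g) (hdiff : Differentiable ℝ g)
    (hg' : Integrable (deriv g)) (ξ : ℝ) : fourierT (deriv g) ξ = I * ξ * fourierT g ξ := by
  simp only [fourierT_eq_fourier, Real.fourier_deriv hg hdiff hg', smul_eq_mul]
  push_cast
  field_simp

lemma integrable_fourierT_deriv_mul_exp (f : SchwartzMap ℝ ℂ) (y : ℝ) :
    Integrable (fun ξ : ℝ => I * ξ * fourierT f ξ * exp (I * ξ * y)) := by
  have := continuous_fourierT f
  refine (integrable_pow_mul_norm_fourierT f 1).mono'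
    (Continuous.aestronglyMeasurable (by fun_prop)) (.of_forall fun ξ => ?_)
  simp [norm_exp_I_mul_mul]

lemma fourierT_inversion_deriv (f : SchwartzMap ℝ ℂ) (y : ℝ) :
    ((1 / (2 * Real.pi) : ℝ) : ℂ) * ∫ ξ : ℝ, I * ξ * fourierT f ξ * exp (I * ξ * y) =
      deriv f y := by
  have integrable_deriv : Integrable (deriv f) := (SchwartzMap.derivCLM ℂ ℂ f).integrable
  have fourierT_eq := fourierT_deriv f.integrable f.differentiable integrable_deriv
  simp only [← fourierT_eq]
  refine fourierT_inversion integrable_deriv ?_ (SchwartzMap.derivCLM ℂ ℂ f).continuous.continuousAt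
  simpa [funext fourierT_eq] using integrable_fourierT_deriv_mul_exp f 0

end FourierInversion

section LevyExponent

open Set
open Complex (I exp)

/-- The integrand `e^{iξu} - 1 - iξu 1_{|u| ≤ 1}` of the Lévy–Khintchine formula. -/
noncomputable def levyIntegrand (ξ u : ℝ) : ℂ :=
  exp (I * ξ * u) - 1 - (if |u| ≤ 1 then I * ξ * u else 0)

/-- The kernel `(e^{iξu} - 1_{|u| ≤ 1}) u`, for which `I * levyKernel ξ u` is the `ξ`-derivative of
`levyIntegrand ξ u`. -/
noncomputable def levyKernel (ξ u : ℝ) : ℂ :=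
  (exp (I * ξ * u) - (if |u| ≤ 1 then 1 else 0)) * u

/-- The Lévy–Khintchine exponent with drift `γ`, Lévy measure `ν` and no Gaussian part. -/
noncomputable def levyExponent (ν : Measure ℝ) (γ ξ : ℝ) : ℂ :=
  I * ξ * γ + ∫ u, levyIntegrand ξ u ∂ν

/-- The derivative of `levyExponent ν γ`. -/
noncomputable def levyExponentDeriv (ν : Measure ℝ) (γ ξ : ℝ) : ℂ :=
  I * (γ + ∫ u, levyKernel ξ u ∂ν)

/-- Self-decomposability of an infinitely divisible law, expressed through its Lévy measure:
contracting `ν` towards the origin decreases it. -/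
def IsSelfDecomposable (ν : Measure ℝ) : Prop :=
  ∀ s ∈ Ioc (0 : ℝ) 1, ν.map (s * ·) ≤ ν

lemma min_sq_abs_of_abs_le_one {u : ℝ} (hu : |u| ≤ 1) : min (u ^ 2) |u| = u ^ 2 := by
  rw [← sq_abs]
  exact min_eq_left (pow_le_of_le_one (abs_nonneg u) hu two_ne_zero)

lemma min_sq_abs_of_one_le_abs {u : ℝ} (hu : 1 ≤ |u|) : min (u ^ 2) |u| = |u| := by
  rw [← sq_abs]
  exact min_eq_right (le_self_pow₀ hu two_ne_zero)

lemma measurable_levyIntegrand (ξ : ℝ) : Measurable (levyIntegrand ξ) :=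
  (by fun_prop : Measurable fun u : ℝ => exp (I * ξ * u) - 1).sub
    (Measurable.ite (measurableSet_le (by fun_prop) (by fun_prop)) (by fun_prop) (by fun_prop))

lemma measurable_uncurry_levyKernel : Measurable (Function.uncurry levyKernel) :=
  Measurable.mul
    (.sub (by fun_prop)
      (.ite (measurableSet_le (by fun_prop) (by fun_prop)) (by fun_prop) (by fun_prop)))
    (by fun_prop)

lemma norm_levyKernel_le (ξ u : ℝ) : ‖levyKernel ξ u‖ ≤ (1 + |ξ|) * min (u ^ 2) |u| := by
  rw [levyKernel, norm_mul, Complex.norm_real, Real.norm_eq_abs]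
  split_ifs with hu
  · have increment : ‖exp (I * ξ * u) - 1‖ ≤ |ξ| * |u| := by
      rw [mul_assoc, ← Complex.ofReal_mul, ← abs_mul]
      exact Real.norm_exp_I_mul_ofReal_sub_one_le
    calc ‖exp (I * ξ * u) - 1‖ * |u| ≤ |ξ| * |u| * |u| := by gcongr
      _ = |ξ| * u ^ 2 := by rw [← sq_abs u]; ring
      _ ≤ (1 + |ξ|) * u ^ 2 := by gcongr; linarith
      _ = (1 + |ξ|) * min (u ^ 2) |u| := by rw [min_sq_abs_of_abs_le_one hu]
  · rw [sub_zero, norm_exp_I_mul_mul, min_sq_abs_of_one_le_abs (not_le.1 hu).le]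
    gcongr
    linarith [abs_nonneg ξ]

lemma hasDerivAt_levyIntegrand (ξ u : ℝ) :
    HasDerivAt (fun ξ => levyIntegrand ξ u) (I * levyKernel ξ u) ξ := by
  have phase : HasDerivAt (fun ξ : ℝ => I * ξ * u) (I * u) ξ := by
    simpa using ((hasDerivAt_id ξ).ofReal_comp.const_mul I).mul_const (u : ℂ)
  unfold levyIntegrand levyKernel
  split_ifs
  · exact ((phase.cexp.sub_const 1).sub phase).congr_deriv (by ring)
  · exact ((phase.cexp.sub_const 1).sub_const 0).congr_deriv (by ring)

lemma norm_levyIntegrand_le (ξ u : ℝ) :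
    ‖levyIntegrand ξ u‖ ≤ (1 + |ξ|) * min (u ^ 2) |u| * |ξ| := by
  have deriv_le : ∀ x ∈ Icc (-|ξ|) |ξ|, ‖I * levyKernel x u‖ ≤ (1 + |ξ|) * min (u ^ 2) |u| := by
    intro x hx
    have abs_le_abs : |x| ≤ |ξ| := abs_le.2 hx
    rw [norm_mul, Complex.norm_I, one_mul]
    refine (norm_levyKernel_le x u).trans ?_
    gcongr
  simpa [levyIntegrand] using (convex_Icc (-|ξ|) |ξ|).norm_image_sub_le_of_norm_hasDerivWithin_le
    (fun x _ => (hasDerivAt_levyIntegrand x u).hasDerivWithinAt) deriv_le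
    (x := 0) (y := ξ) (by simp) ⟨neg_abs_le ξ, le_abs_self ξ⟩

lemma re_levyIntegrand (ξ u : ℝ) : (levyIntegrand ξ u).re = -(1 - Real.cos (ξ * u)) := by
  have phase : I * ξ * u = ((ξ * u : ℝ) : ℂ) * I := by push_cast; ring
  rw [levyIntegrand, phase]
  split_ifs <;> simp [Complex.exp_ofReal_mul_I_re, -Complex.ofReal_mul]

variable {ν : Measure ℝ}

lemma integrable_levyIntegrand (hν : Integrable (fun u => min (u ^ 2) |u|) ν) (ξ : ℝ) :
    Integrable (levyIntegrand ξ) ν :=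
  ((hν.const_mul (1 + |ξ|)).mul_const |ξ|).mono' (measurable_levyIntegrand ξ).aestronglyMeasurable
    (.of_forall (norm_levyIntegrand_le ξ))

lemma integrable_one_sub_cos (hν : Integrable (fun u => min (u ^ 2) |u|) ν) (ξ : ℝ) :
    Integrable (fun u => 1 - Real.cos (ξ * u)) ν := by
  refine (integrable_levyIntegrand hν ξ).re.neg.congr (.of_forall fun u => ?_)
  simp [re_levyIntegrand]

lemma hasDerivAt_levyExponent (hν : Integrable (fun u => min (u ^ 2) |u|) ν) (γ ξ : ℝ) :
    HasDerivAt (levyExponent ν γ) (levyExponentDeriv ν γ ξ) ξ := by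
  have drift : HasDerivAt (fun ξ : ℝ => I * ξ * (γ : ℂ)) (I * γ) ξ := by
    simpa using ((hasDerivAt_id ξ).ofReal_comp.const_mul I).mul_const (γ : ℂ)
  have deriv_le : ∀ u, ∀ x ∈ Metric.ball ξ 1,
      ‖I * levyKernel x u‖ ≤ (1 + (|ξ| + 1)) * min (u ^ 2) |u| := by
    intro u x hx
    rw [norm_mul, Complex.norm_I, one_mul]
    refine (norm_levyKernel_le x u).trans ?_
    gcongr
    linarith [abs_sub_abs_le_abs_sub x ξ, Real.dist_eq x ξ ▸ Metric.mem_ball.1 hx]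
  have jumps := (hasDerivAt_integral_of_dominated_loc_of_deriv_le
    (F' := fun ξ u => I * levyKernel ξ u) (Metric.ball_mem_nhds ξ one_pos)
    (.of_forall fun x => (measurable_levyIntegrand x).aestronglyMeasurable)
    (integrable_levyIntegrand hν ξ)
    ((measurable_uncurry_levyKernel.comp measurable_prodMk_left).const_mul I).aestronglyMeasurable
    (.of_forall deriv_le) (hν.const_mul _)
    (.of_forall fun u x _ => hasDerivAt_levyIntegrand x u)).2
  rw [integral_const_mul] at jumps
  exact (drift.add jumps).congr_deriv (mul_add _ _ _).symm

lemma continuous_levyExponent (hν : Integrable (fun u => min (u ^ 2) |u|) ν) (γ : ℝ) :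
    Continuous (levyExponent ν γ) :=
  continuous_iff_continuousAt.2 fun ξ => (hasDerivAt_levyExponent hν γ ξ).continuousAt

lemma norm_levyExponentDeriv_le (hν : Integrable (fun u => min (u ^ 2) |u|) ν) (γ ξ : ℝ) :
    ‖levyExponentDeriv ν γ ξ‖ ≤ (|γ| + ∫ u, min (u ^ 2) |u| ∂ν) * (1 + |ξ|) := by
  have jumps : ‖∫ u, levyKernel ξ u ∂ν‖ ≤ (1 + |ξ|) * ∫ u, min (u ^ 2) |u| ∂ν := by
    rw [← integral_const_mul]
    exact norm_integral_le_of_norm_le (hν.const_mul _) (.of_forall (norm_levyKernel_le ξ))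
  calc ‖levyExponentDeriv ν γ ξ‖ = ‖(γ : ℂ) + ∫ u, levyKernel ξ u ∂ν‖ := by
        rw [levyExponentDeriv, norm_mul, Complex.norm_I, one_mul]
    _ ≤ |γ| + (1 + |ξ|) * ∫ u, min (u ^ 2) |u| ∂ν := by
        grw [norm_add_le, jumps, Complex.norm_real, Real.norm_eq_abs]
    _ ≤ (|γ| + ∫ u, min (u ^ 2) |u| ∂ν) * (1 + |ξ|) := by
        linarith [mul_nonneg (abs_nonneg γ) (abs_nonneg ξ)]

lemma re_levyExponent (hν : Integrable (fun u => min (u ^ 2) |u|) ν) (γ ξ : ℝ) :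
    (levyExponent ν γ ξ).re = -∫ u, (1 - Real.cos (ξ * u)) ∂ν := by
  have re_integral : (∫ u, levyIntegrand ξ u ∂ν).re = ∫ u, (levyIntegrand ξ u).re ∂ν :=
    (integral_re (integrable_levyIntegrand hν ξ)).symm
  have re_drift : (I * ξ * γ : ℂ).re = 0 := by simp
  rw [levyExponent, Complex.add_re, re_integral, re_drift, zero_add]
  simp only [re_levyIntegrand, integral_neg]

lemma IsSelfDecomposable.re_levyExponent_le (hsd : IsSelfDecomposable ν)
    (hν : Integrable (fun u => min (u ^ 2) |u|) ν) (γ ξ : ℝ) {s : ℝ} (hs : s ∈ Ioc (0 : ℝ) 1) :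
    (levyExponent ν γ ξ).re ≤ (levyExponent ν γ (s * ξ)).re := by
  rw [re_levyExponent hν, re_levyExponent hν, neg_le_neg_iff]
  calc ∫ u, (1 - Real.cos (s * ξ * u)) ∂ν = ∫ u, (1 - Real.cos (ξ * (s * u))) ∂ν := by
        simp only [mul_assoc, mul_left_comm s ξ]
    _ = ∫ v, (1 - Real.cos (ξ * v)) ∂(ν.map (s * ·)) :=
        (integral_map (by fun_prop)
          (Continuous.aestronglyMeasurable (f := fun v => 1 - Real.cos (ξ * v)) (by fun_prop))).symm
    _ ≤ ∫ v, (1 - Real.cos (ξ * v)) ∂ν :=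
        integral_mono_measure (hsd s hs)
          (.of_forall fun v => sub_nonneg.2 (Real.cos_le_one _)) (integrable_one_sub_cos hν ξ)

end LevyExponent

section Semigroup

open Filter Topology Set
open Complex (I exp)

/-- The Fourier multiplier family attached to the characteristic function `exp (levyExponent ν γ)`:
it is `Pt` with the stable law replaced by the law of Lévy measure `ν` and drift `γ`. -/
noncomputable def levySemigroup (ν : Measure ℝ) (γ t : ℝ) (g : ℝ → ℂ) (x : ℝ) : ℂ :=
  ((1 / (2 * Real.pi) : ℝ) : ℂ) *
    ∫ ξ : ℝ, fourierT g ξ * exp (I * ξ * x * ((Real.exp (-t) : ℝ) : ℂ)) *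
      exp (levyExponent ν γ ξ) / exp (levyExponent ν γ (Real.exp (-t) * ξ))

/-- The factor that multiplies `f̂(ξ)` in the formula for `P_t f(x)`. -/
noncomputable def levyMultiplier (ν : Measure ℝ) (γ x ξ t : ℝ) : ℂ :=
  exp (I * ξ * x * ((Real.exp (-t) : ℝ) : ℂ) +
    (levyExponent ν γ ξ - levyExponent ν γ (Real.exp (-t) * ξ)))

/-- The logarithmic derivative of `levyMultiplier ν γ x ξ` with respect to time. -/
noncomputable def levyMultiplierLogDeriv (ν : Measure ℝ) (γ x ξ t : ℝ) : ℂ :=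
  ξ * Real.exp (-t) * (levyExponentDeriv ν γ (Real.exp (-t) * ξ) - I * x)

variable {ν : Measure ℝ}

lemma levySemigroup_eq_integral_levyMultiplier (ν : Measure ℝ) (γ t : ℝ) (g : ℝ → ℂ) (x : ℝ) :
    levySemigroup ν γ t g x =
      ((1 / (2 * Real.pi) : ℝ) : ℂ) * ∫ ξ : ℝ, fourierT g ξ * levyMultiplier ν γ x ξ t := by
  simp only [levySemigroup, levyMultiplier, Complex.exp_add, Complex.exp_sub, mul_assoc,
    mul_div_assoc]

lemma levyMultiplier_zero (ν : Measure ℝ) (γ x ξ : ℝ) :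
    levyMultiplier ν γ x ξ 0 = exp (I * ξ * x) := by
  simp [levyMultiplier]

lemma levySemigroup_zero (ν : Measure ℝ) (γ : ℝ) (f : SchwartzMap ℝ ℂ) (x : ℝ) :
    levySemigroup ν γ 0 f x = f x := by
  have integrable_fourierT : Integrable (fourierT f) :=
    (integrable_norm_iff (continuous_fourierT f).aestronglyMeasurable).1
      (by simpa using integrable_pow_mul_norm_fourierT f 0)
  simpa only [levySemigroup_eq_integral_levyMultiplier, levyMultiplier_zero] using
    fourierT_inversion f.integrable integrable_fourierT f.continuous.continuousAt

lemma IsSelfDecomposable.norm_levyMultiplier_le_one (hsd : IsSelfDecomposable ν)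
    (hν : Integrable (fun u => min (u ^ 2) |u|) ν) (γ x ξ : ℝ) {t : ℝ} (ht : 0 ≤ t) :
    ‖levyMultiplier ν γ x ξ t‖ ≤ 1 := by
  have contraction : Real.exp (-t) ∈ Ioc (0 : ℝ) 1 :=
    ⟨Real.exp_pos _, Real.exp_le_one_iff.2 (neg_nonpos.2 ht)⟩
  have norm_phase : ‖exp (I * ξ * x * ((Real.exp (-t) : ℝ) : ℂ))‖ = 1 := by
    rw [mul_assoc (I * (ξ : ℂ)), ← Complex.ofReal_mul, norm_exp_I_mul_mul]
  rw [levyMultiplier, Complex.exp_add, norm_mul, norm_phase, one_mul, Complex.norm_exp,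
    Real.exp_le_one_iff, Complex.sub_re, sub_nonpos]
  exact hsd.re_levyExponent_le hν γ ξ contraction

lemma continuous_levyMultiplier (hν : Integrable (fun u => min (u ^ 2) |u|) ν) (γ x t : ℝ) :
    Continuous (fun ξ => levyMultiplier ν γ x ξ t) := by
  have := continuous_levyExponent hν γ
  unfold levyMultiplier
  fun_prop

lemma hasDerivAt_levyMultiplier (hν : Integrable (fun u => min (u ^ 2) |u|) ν) (γ x ξ t : ℝ) :
    HasDerivAt (levyMultiplier ν γ x ξ)
      (levyMultiplier ν γ x ξ t * levyMultiplierLogDeriv ν γ x ξ t) t := by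
  have contraction : HasDerivAt (fun t : ℝ => Real.exp (-t)) (-Real.exp (-t)) t := by
    simpa using (hasDerivAt_neg t).exp
  have exponent : HasDerivAt (fun t : ℝ => levyExponent ν γ (Real.exp (-t) * ξ))
      ((-Real.exp (-t) * ξ) • levyExponentDeriv ν γ (Real.exp (-t) * ξ)) t :=
    HasDerivAt.scomp (g₁ := levyExponent ν γ) t
      (hasDerivAt_levyExponent hν γ (Real.exp (-t) * ξ)) (contraction.mul_const ξ)
  refine ((contraction.ofReal_comp.const_mul (I * ξ * x)).add
    (exponent.const_sub (levyExponent ν γ ξ))).cexp.congr_deriv ?_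
  simp only [levyMultiplier, levyMultiplierLogDeriv, Complex.real_smul, Pi.add_apply]
  push_cast
  ring

lemma norm_levyMultiplierLogDeriv_le (hν : Integrable (fun u => min (u ^ 2) |u|) ν) (γ x ξ : ℝ)
    {t : ℝ} (ht : 0 ≤ t) :
    ‖levyMultiplierLogDeriv ν γ x ξ t‖ ≤
      (|γ| + ∫ u, min (u ^ 2) |u| ∂ν + |x|) * (|ξ| + |ξ| ^ 2) := by
  have exp_le_one : Real.exp (-t) ≤ 1 := Real.exp_le_one_iff.2 (neg_nonpos.2 ht)
  set M := |γ| + ∫ u, min (u ^ 2) |u| ∂ν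
  have : 0 ≤ M :=
    add_nonneg (abs_nonneg γ) (integral_nonneg fun u => le_min (sq_nonneg u) (abs_nonneg u))
  have contraction : |Real.exp (-t) * ξ| ≤ |ξ| := by
    rw [abs_mul, Real.abs_exp]
    exact mul_le_of_le_one_left (abs_nonneg ξ) exp_le_one
  have deriv_le : ‖levyExponentDeriv ν γ (Real.exp (-t) * ξ)‖ ≤ M * (1 + |ξ|) := by
    refine (norm_levyExponentDeriv_le hν γ _).trans ?_
    gcongr
  calc ‖levyMultiplierLogDeriv ν γ x ξ t‖
      = |ξ| * Real.exp (-t) * ‖levyExponentDeriv ν γ (Real.exp (-t) * ξ) - I * x‖ := by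
        simp only [levyMultiplierLogDeriv, norm_mul, Complex.norm_real, Real.norm_eq_abs,
          Real.abs_exp]
    _ ≤ |ξ| * 1 * (M * (1 + |ξ|) + |x|) := by
        gcongr
        refine (norm_sub_le _ _).trans (add_le_add deriv_le (le_of_eq ?_))
        simp
    _ ≤ (M + |x|) * (|ξ| + |ξ| ^ 2) := by
        linarith [mul_nonneg (abs_nonneg x) (sq_nonneg |ξ|)]

lemma IsSelfDecomposable.hasDerivWithinAt_levySemigroup (hsd : IsSelfDecomposable ν)
    (hν : Integrable (fun u => min (u ^ 2) |u|) ν) (γ : ℝ) (f : SchwartzMap ℝ ℂ) (x : ℝ) {t : ℝ}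
    (ht : 0 ≤ t) :
    HasDerivWithinAt (fun t => levySemigroup ν γ t f x)
      (((1 / (2 * Real.pi) : ℝ) : ℂ) * ∫ ξ : ℝ, fourierT f ξ *
        (levyMultiplier ν γ x ξ t * levyMultiplierLogDeriv ν γ x ξ t)) (Ici 0) t := by
  set M := |γ| + ∫ u, min (u ^ 2) |u| ∂ν + |x|
  have integrable_mul : ∀ t ∈ Ici (0 : ℝ),
      Integrable (fun ξ => fourierT f ξ * levyMultiplier ν γ x ξ t) := by
    intro t ht
    refine (integrable_pow_mul_norm_fourierT f 0).mono' ((continuous_fourierT f).mul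
      (continuous_levyMultiplier hν γ x t)).aestronglyMeasurable (.of_forall fun ξ => ?_)
    rw [norm_mul, pow_zero, one_mul]
    exact mul_le_of_le_one_right (norm_nonneg _) (hsd.norm_levyMultiplier_le_one hν γ x ξ ht)
  have deriv_le : ∀ ξ, ∀ t ∈ Ici (0 : ℝ), ‖fourierT f ξ *
      (levyMultiplier ν γ x ξ t * levyMultiplierLogDeriv ν γ x ξ t)‖ ≤
        M * (|ξ| ^ 1 * ‖fourierT f ξ‖ + |ξ| ^ 2 * ‖fourierT f ξ‖) := by
    intro ξ t ht
    rw [norm_mul, norm_mul]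
    calc _ ≤ ‖fourierT f ξ‖ * (1 * (M * (|ξ| + |ξ| ^ 2))) := by
          gcongr
          · exact hsd.norm_levyMultiplier_le_one hν γ x ξ ht
          · exact norm_levyMultiplierLogDeriv_le hν γ x ξ ht
      _ = _ := by ring
  simp only [levySemigroup_eq_integral_levyMultiplier]
  exact (hasDerivWithinAt_integral_of_dominated_of_convex (convex_Ici 0) ht integrable_mul
    (((integrable_pow_mul_norm_fourierT f 1).add
      (integrable_pow_mul_norm_fourierT f 2)).const_mul M) (.of_forall deriv_le)
    (.of_forall fun ξ s _ => ((hasDerivAt_levyMultiplier hν γ x ξ s).const_mul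
      (fourierT f ξ)).hasDerivWithinAt)).const_mul _

lemma integrable_fourierT_deriv_mul_levyKernel [SFinite ν]
    (hν : Integrable (fun u => min (u ^ 2) |u|) ν) (f : SchwartzMap ℝ ℂ) (x : ℝ) :
    Integrable (Function.uncurry fun ξ u : ℝ =>
      I * ξ * fourierT f ξ * exp (I * ξ * x) * levyKernel ξ u) (volume.prod ν) := by
  have continuous_left : Continuous fun p : ℝ × ℝ =>
      I * p.1 * fourierT f p.1 * exp (I * p.1 * x) := by
    have := continuous_fourierT f
    fun_prop
  refine (((integrable_pow_mul_norm_fourierT f 1).add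
    (integrable_pow_mul_norm_fourierT f 2)).mul_prod hν).mono'
    (continuous_left.measurable.mul measurable_uncurry_levyKernel).aestronglyMeasurable
    (.of_forall fun ⟨ξ, u⟩ => ?_)
  calc ‖I * ξ * fourierT f ξ * exp (I * ξ * x) * levyKernel ξ u‖
      = |ξ| * ‖fourierT f ξ‖ * ‖levyKernel ξ u‖ := by simp [norm_exp_I_mul_mul]
    _ ≤ |ξ| * ‖fourierT f ξ‖ * ((1 + |ξ|) * min (u ^ 2) |u|) := by
        gcongr
        exact norm_levyKernel_le ξ u
    _ = (|ξ| ^ 1 * ‖fourierT f ξ‖ + |ξ| ^ 2 * ‖fourierT f ξ‖) * min (u ^ 2) |u| := by ring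

lemma fourierT_inversion_levyKernel (f : SchwartzMap ℝ ℂ) (x u : ℝ) :
    ((1 / (2 * Real.pi) : ℝ) : ℂ) *
      ∫ ξ : ℝ, I * ξ * fourierT f ξ * exp (I * ξ * x) * levyKernel ξ u =
        (deriv f (x + u) - (if |u| ≤ 1 then deriv f x else 0)) * u := by
  have translate : ∀ ξ : ℝ, I * ξ * fourierT f ξ * exp (I * ξ * x) * levyKernel ξ u =
      (I * ξ * fourierT f ξ * exp (I * ξ * ((x + u : ℝ) : ℂ)) -
        (if |u| ≤ 1 then 1 else 0) * (I * ξ * fourierT f ξ * exp (I * ξ * x))) * u := by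
    intro ξ
    rw [levyKernel, Complex.ofReal_add, mul_add (I * (ξ : ℂ)), Complex.exp_add]
    ring
  simp only [translate]
  rw [integral_mul_const, integral_sub (integrable_fourierT_deriv_mul_exp f _)
    ((integrable_fourierT_deriv_mul_exp f x).const_mul _), integral_const_mul,
    ← fourierT_inversion_deriv f (x + u), ← fourierT_inversion_deriv f x]
  split_ifs <;> ring

lemma integrable_deriv_jump [SFinite ν] (hν : Integrable (fun u => min (u ^ 2) |u|) ν)
    (f : SchwartzMap ℝ ℂ) (x : ℝ) :
    Integrable (fun u : ℝ => (deriv f (x + u) - (if |u| ≤ 1 then deriv f x else 0)) * (u : ℂ))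
      ν := by
  simpa only [Function.uncurry_apply_pair, fourierT_inversion_levyKernel] using
    (integrable_fourierT_deriv_mul_levyKernel hν f x).integral_prod_right.const_mul
      ((1 / (2 * Real.pi) : ℝ) : ℂ)

lemma fourierT_inversion_levyMultiplier_deriv_zero [SFinite ν]
    (hν : Integrable (fun u => min (u ^ 2) |u|) ν) (γ : ℝ) (f : SchwartzMap ℝ ℂ) (x : ℝ) :
    ((1 / (2 * Real.pi) : ℝ) : ℂ) * ∫ ξ : ℝ, fourierT f ξ *
        (levyMultiplier ν γ x ξ 0 * levyMultiplierLogDeriv ν γ x ξ 0) =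
      -(x : ℂ) * deriv f x + γ * deriv f x +
        ∫ u : ℝ, (deriv f (x + u) - (if |u| ≤ 1 then deriv f x else 0)) * (u : ℂ) ∂ν := by
  have integrable_kernel := integrable_fourierT_deriv_mul_levyKernel hν f x
  have integrable_jumps : Integrable fun ξ : ℝ =>
      ∫ u, I * ξ * fourierT f ξ * exp (I * ξ * x) * levyKernel ξ u ∂ν :=
    integrable_kernel.integral_prod_left
  have integrand_eq : ∀ ξ : ℝ, fourierT f ξ *
      (levyMultiplier ν γ x ξ 0 * levyMultiplierLogDeriv ν γ x ξ 0) =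
        ((γ : ℂ) - x) * (I * ξ * fourierT f ξ * exp (I * ξ * x)) +
          ∫ u, I * ξ * fourierT f ξ * exp (I * ξ * x) * levyKernel ξ u ∂ν := by
    intro ξ
    rw [integral_const_mul, levyMultiplier_zero]
    simp only [levyMultiplierLogDeriv, levyExponentDeriv, neg_zero, Real.exp_zero, one_mul,
      Complex.ofReal_one, mul_one]
    ring
  simp only [← fourierT_inversion_levyKernel, integrand_eq]
  rw [integral_const_mul, ← integral_integral_swap integrable_kernel,
    integral_add ((integrable_fourierT_deriv_mul_exp f x).const_mul _) integrable_jumps,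
    integral_const_mul, ← fourierT_inversion_deriv f x]
  ring

theorem stmt_13_general [SFinite ν] (hsd : IsSelfDecomposable ν)
    (hν : Integrable (fun u => min (u ^ 2) |u|) ν) (γ : ℝ) (f : SchwartzMap ℝ ℂ) (x : ℝ) :
    Integrable (fun u : ℝ => (deriv f (x + u) - (if |u| ≤ 1 then deriv f x else 0)) * (u : ℂ)) ν ∧
    Tendsto (fun t : ℝ => (levySemigroup ν γ t f x - f x) / (t : ℂ)) (𝓝[>] 0)
      (𝓝 (-(x : ℂ) * deriv f x + γ * deriv f x +
        ∫ u : ℝ, (deriv f (x + u) - (if |u| ≤ 1 then deriv f x else 0)) * (u : ℂ) ∂ν)) := by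
  refine ⟨integrable_deriv_jump hν f x, ?_⟩
  have derivative_at_zero := hsd.hasDerivWithinAt_levySemigroup hν γ f x le_rfl
  rw [fourierT_inversion_levyMultiplier_deriv_zero hν, hasDerivWithinAt_iff_tendsto_slope,
    Ici_sdiff_left] at derivative_at_zero
  refine derivative_at_zero.congr fun t => ?_
  rw [slope_def_module, levySemigroup_zero, sub_zero, Complex.real_smul, Complex.ofReal_inv,
    div_eq_inv_mul]

end Semigroup

section StableMeasure

open Set
open scoped ENNReal

lemma map_mul_left_withDensity {k : ℝ → ℝ≥0∞} (hk : Measurable k) {s : ℝ} (hs : s ≠ 0) :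
    (volume.withDensity k).map (s * ·) =
      ENNReal.ofReal |s⁻¹| • volume.withDensity (fun u => k (s⁻¹ * u)) := by
  rw [← withDensity_smul_measure, ← Real.map_volume_mul_left hs]
  ext A hA
  rw [Measure.map_apply (by fun_prop) hA, withDensity_apply _ (measurable_const_mul s hA),
    withDensity_apply _ hA, setLIntegral_map hA (by fun_prop) (by fun_prop)]
  simp only [inv_mul_cancel_left₀ hs]

/-- The density of `nuStable`, before truncation to nonnegative values. -/
noncomputable def stableDensity (α m₁ m₂ u : ℝ) : ℝ :=
  if 0 < u then m₁ * u ^ (-α - 1) else if u < 0 then m₂ * |u| ^ (-α - 1) else 0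

lemma nuStable_eq_withDensity (α m₁ m₂ : ℝ) :
    nuStable α m₁ m₂ = volume.withDensity fun u => ENNReal.ofReal (stableDensity α m₁ m₂ u) :=
  rfl

instance (α m₁ m₂ : ℝ) : SFinite (nuStable α m₁ m₂) := by
  rw [nuStable_eq_withDensity]
  infer_instance

lemma measurable_stableDensity (α m₁ m₂ : ℝ) : Measurable (stableDensity α m₁ m₂) :=
  Measurable.ite measurableSet_Ioi (by fun_prop)
    (Measurable.ite measurableSet_Iio ((measurable_id.abs.pow_const _).const_mul _) (by fun_prop))

lemma stableDensity_nonneg {m₁ m₂ : ℝ} (α : ℝ) (hm₁ : 0 ≤ m₁) (hm₂ : 0 ≤ m₂) (u : ℝ) :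
    0 ≤ stableDensity α m₁ m₂ u := by
  unfold stableDensity
  split_ifs <;> positivity

lemma stableDensity_le {m₁ m₂ : ℝ} (α : ℝ) (hm₁ : 0 ≤ m₁) (hm₂ : 0 ≤ m₂) (u : ℝ) :
    stableDensity α m₁ m₂ u ≤ (m₁ + m₂) * |u| ^ (-α - 1) := by
  unfold stableDensity
  split_ifs with hpos
  · rw [abs_of_pos hpos]
    gcongr
    linarith
  · gcongr
    linarith
  · positivity

lemma stableDensity_mul_left (α m₁ m₂ : ℝ) {s : ℝ} (hs : 0 < s) (u : ℝ) :
    stableDensity α m₁ m₂ (s * u) = s ^ (-α - 1) * stableDensity α m₁ m₂ u := by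
  have neg_iff : s * u < 0 ↔ u < 0 := smul_neg_iff_of_pos_left hs
  simp only [stableDensity, mul_pos_iff_of_pos_left hs, neg_iff, abs_mul,
    abs_of_pos hs, Real.mul_rpow hs.le (abs_nonneg u)]
  split_ifs with hpos
  · rw [Real.mul_rpow hs.le hpos.le]
    ring
  · ring
  · ring

lemma map_mul_left_nuStable (α m₁ m₂ : ℝ) {s : ℝ} (hs : 0 < s) :
    (nuStable α m₁ m₂).map (s * ·) = ENNReal.ofReal (s ^ α) • nuStable α m₁ m₂ := by
  have measurable_density := (measurable_stableDensity α m₁ m₂).ennreal_ofReal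
  have exponents : s⁻¹ * s⁻¹ ^ (-α - 1) = s ^ α := by
    rw [Real.inv_rpow hs.le, ← Real.rpow_neg hs.le, ← Real.rpow_neg_one, ← Real.rpow_add hs]
    ring_nf
  have density_scaling : (fun u => ENNReal.ofReal (stableDensity α m₁ m₂ (s⁻¹ * u))) =
      ENNReal.ofReal (s⁻¹ ^ (-α - 1)) • fun u => ENNReal.ofReal (stableDensity α m₁ m₂ u) := by
    funext u
    rw [stableDensity_mul_left α m₁ m₂ (inv_pos.2 hs), ENNReal.ofReal_mul (by positivity),
      Pi.smul_apply, smul_eq_mul]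
  rw [nuStable_eq_withDensity, map_mul_left_withDensity measurable_density hs.ne',
    density_scaling, withDensity_smul _ measurable_density, smul_smul,
    abs_of_pos (inv_pos.2 hs), ← ENNReal.ofReal_mul (by positivity), exponents]

lemma isSelfDecomposable_nuStable {α : ℝ} (hα : 0 ≤ α) (m₁ m₂ : ℝ) :
    IsSelfDecomposable (nuStable α m₁ m₂) := by
  rintro s ⟨hs, hs1⟩
  rw [map_mul_left_nuStable α m₁ m₂ hs]
  refine Measure.le_iff'.2 fun A => ?_
  rw [Measure.smul_apply, smul_eq_mul]
  exact mul_le_of_le_one_left' (ENNReal.ofReal_le_one.2 (Real.rpow_le_one hs.le hs1 hα))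

lemma integrable_abs_rpow_mul_min_sq_abs {α : ℝ} (hα : 1 < α) (hα2 : α < 2) :
    Integrable (fun u : ℝ => |u| ^ (-α - 1) * min (u ^ 2) |u|) := by
  have near_zero : IntegrableOn (fun u : ℝ => u ^ (-α - 1) * min (u ^ 2) |u|) (Ioc 0 1) := by
    have : IntegrableOn (fun u : ℝ => u ^ (1 - α)) (Ioc 0 1) :=
      (intervalIntegrable_iff_integrableOn_Ioc_of_le zero_le_one).1
        (intervalIntegral.intervalIntegrable_rpow' (by linarith))
    refine this.congr_fun (fun u hu => ?_) measurableSet_Ioc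
    dsimp only
    rw [min_sq_abs_of_abs_le_one (abs_le.2 ⟨by linarith [hu.1], hu.2⟩), ← Real.rpow_natCast,
      ← Real.rpow_add hu.1]
    ring_nf
  have near_infinity : IntegrableOn (fun u : ℝ => u ^ (-α - 1) * min (u ^ 2) |u|) (Ioi 1) := by
    refine (integrableOn_Ioi_rpow_of_lt (neg_lt_neg hα) one_pos).congr_fun (fun u hu => ?_)
      measurableSet_Ioi
    have hu0 : 0 < u := one_pos.trans hu
    dsimp only
    rw [min_sq_abs_of_one_le_abs (hu.le.trans (le_abs_self u)), abs_of_pos hu0,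
      ← Real.rpow_add_one hu0.ne', sub_add_cancel]
  have half_line := near_zero.union near_infinity
  rw [Ioc_union_Ioi_eq_Ioi zero_le_one] at half_line
  have radial : Integrable fun u : ℝ => ‖u‖ ^ (-α - 1) * min (‖u‖ ^ 2) |‖u‖| :=
    (integrable_fun_norm_addHaar volume (f := fun r : ℝ => r ^ (-α - 1) * min (r ^ 2) |r|)).2
      (by simpa using half_line)
  simpa only [Real.norm_eq_abs, sq_abs, abs_abs] using radial

lemma integrable_min_sq_abs_nuStable {α m₁ m₂ : ℝ} (hα : 1 < α) (hα2 : α < 2) (hm₁ : 0 ≤ m₁)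
    (hm₂ : 0 ≤ m₂) : Integrable (fun u => min (u ^ 2) |u|) (nuStable α m₁ m₂) := by
  rw [nuStable_eq_withDensity, integrable_withDensity_iff_integrable_smul'
    (measurable_stableDensity α m₁ m₂).ennreal_ofReal (by simp)]
  simp only [ENNReal.toReal_ofReal (stableDensity_nonneg α hm₁ hm₂ _), smul_eq_mul]
  refine ((integrable_abs_rpow_mul_min_sq_abs hα hα2).const_mul (m₁ + m₂)).mono'
    ((measurable_stableDensity α m₁ m₂).mul (by fun_prop)).aestronglyMeasurable
    (.of_forall fun u => ?_)
  have min_nonneg : 0 ≤ min (u ^ 2) |u| := le_min (sq_nonneg u) (abs_nonneg u)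
  rw [Real.norm_of_nonneg (mul_nonneg (stableDensity_nonneg α hm₁ hm₂ u) min_nonneg), ← mul_assoc]
  exact mul_le_mul_of_nonneg_right (stableDensity_le α hm₁ hm₂ u) min_nonneg

end StableMeasure

theorem stmt_13 (α m₁ m₂ β : ℝ) (hα : 1 < α) (hα2 : α < 2)
    (hm₁ : 0 ≤ m₁) (hm₂ : 0 ≤ m₂) (hm : 0 < m₁ + m₂)
    (f : SchwartzMap ℝ ℂ) (x : ℝ) :
    Integrable (fun u : ℝ =>
      (deriv (⇑f) (x + u) - (if |u| ≤ 1 then deriv (⇑f) x else 0)) * (u : ℂ))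
      (nuStable α m₁ m₂) ∧
    Filter.Tendsto (fun t : ℝ => (Pt α m₁ m₂ β t (⇑f) x - f x) / (t : ℂ))
      (nhdsWithin 0 (Set.Ioi 0))
      (nhds (-(x : ℂ) * deriv (⇑f) x + ((Gamma12 α m₁ m₂ β : ℝ) : ℂ) * deriv (⇑f) x +
        ∫ u : ℝ, (deriv (⇑f) (x + u) - (if |u| ≤ 1 then deriv (⇑f) x else 0)) * (u : ℂ)
          ∂(nuStable α m₁ m₂))) :=
  stmt_13_general (isSelfDecomposable_nuStable (zero_le_one.trans hα.le) m₁ m₂)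
    (integrable_min_sq_abs_nuStable hα hα2 hm₁ hm₂) (Gamma12 α m₁ m₂ β) f x
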